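/- Let ρ₀ be a d×d complex matrix with Tr(ρ₀) = 1, let P be a d×d Hermitian projection with Tr(P) = 1, and let η be real. On the triple system with indices (i, j, c) ∈ {1,…,d} × {1,…,d} × {0,1}, define: the control state ρ_c = v v† with v = e₀ − η e₁ ∈ ℂ²; the controlled-swap unitary U with entries U_{(i,j,c),(i',j',c')} = [c = c']·( [c = 0]·[i = i'][j = j'] + [c = 1]·[i = j'][j = i'] ); and M = U (ρ₀ ⊗ P ⊗ ρ_c) U†. Let N be the partial trace of M over the second (ancilla) factor, N_{(i,c),(i',c')} = ∑_j M_{(i,j,c),(i',j,c')}, and let the post-measurement matrix be the ⟨+|·|+⟩ sandwich of N over the control factor: F_{i i'} = (1/2) ∑_{c,c'} N_{(i,c),(i',c')}. Then F = (1/2)( ρ₀ − η(ρ₀ P + P ρ₀) + η² P ). -/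

import Mathlib

open Matrix

/-- The controlled-swap unitary on system ⊗ ancilla ⊗ control: it acts as the identity
when the control index is `0` and swaps the first two factors when the control index is `1`. -/
def cswap (d : ℕ) : Matrix (Fin d × Fin d × Fin 2) (Fin d × Fin d × Fin 2) ℂ :=
  Matrix.of fun p q =>
    if p.2.2 = q.2.2 then
      (if p.2.2 = 0 then (if p.1 = q.1 ∧ p.2.1 = q.2.1 then 1 else 0)
       else (if p.1 = q.2.1 ∧ p.2.1 = q.1 then 1 else 0))
    else 0

def cswapPerm (d : ℕ) (p : Fin d × Fin d × Fin 2) : Fin d × Fin d × Fin 2 :=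
  if p.2.2 = 0 then p else (p.2.1, p.1, p.2.2)

theorem cswap_apply' (d : ℕ) (p q : Fin d × Fin d × Fin 2) :
    cswap d p q = if q = cswapPerm d p then 1 else 0 := by
  obtain ⟨i, j, c⟩ := p
  obtain ⟨i', j', c'⟩ := q
  simp only [cswap, cswapPerm, Matrix.of_apply]
  split_ifs <;> simp_all <;> grind

theorem cswap_conj (d : ℕ) (X : Matrix (Fin d × Fin d × Fin 2) (Fin d × Fin d × Fin 2) ℂ)
    (p q : Fin d × Fin d × Fin 2) :
    (cswap d * X * (cswap d)ᴴ) p q = X (cswapPerm d p) (cswapPerm d q) := by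
  rw [Matrix.mul_apply, Finset.sum_eq_single (cswapPerm d q)]
  · rw [Matrix.mul_apply, Finset.sum_eq_single (cswapPerm d p)]
    · simp [cswap_apply', Matrix.conjTranspose_apply]
    · intro b _ hb
      simp [cswap_apply', hb]
    · simp
  · intro b _ hb
    simp [cswap_apply', Matrix.conjTranspose_apply, hb]
  · simp

theorem stmt_17 {d : ℕ} (ρ₀ P : Matrix (Fin d) (Fin d) ℂ) (htr0 : ρ₀.trace = 1)
    (hPh : P.IsHermitian) (hPp : P * P = P) (htrP : P.trace = 1) (η : ℝ) :
    (Matrix.of fun i i' : Fin d =>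
        (1 / 2 : ℂ) * ∑ c : Fin 2, ∑ c' : Fin 2, ∑ j : Fin d,
          (cswap d *
              Matrix.kroneckerMap (· * ·) ρ₀
                (Matrix.kroneckerMap (· * ·) P
                  (vecMulVec ![1, -(η : ℂ)] (star ![1, -(η : ℂ)]))) *
              (cswap d)ᴴ)
            (i, j, c) (i', j, c'))
      = (1 / 2 : ℂ) • (ρ₀ - η • (ρ₀ * P + P * ρ₀) + η ^ 2 • P) := by
  ext i i'
  have h0 : ∑ j, ρ₀ j j = 1 := htr0
  have hP : ∑ j, P j j = 1 := htrP
  simp only [Matrix.of_apply, cswap_conj]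
  simp only [Fin.sum_univ_two, cswapPerm, Matrix.kroneckerMap_apply, vecMulVec_apply]
  have e1 : ∑ j, ρ₀ i i' * P j j = ρ₀ i i' := by rw [← Finset.mul_sum, hP, mul_one]
  have e2 : ∑ j, ρ₀ j j * P i i' = P i i' := by rw [← Finset.sum_mul, h0, one_mul]
  have e3 : ∑ j, ρ₀ j i' * P i j = ∑ j, P i j * ρ₀ j i' :=
    Finset.sum_congr rfl fun j _ => mul_comm _ _
  simp [← mul_assoc, Matrix.mul_apply, ← Finset.sum_mul, e1, e2, e3]
  ring
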